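/- arXiv:1009.6023 — 2 statements merged into one kernel-verified Lean document; each statement's English description precedes it below -/
import Mathlib

section
/- Let $A = (a_{ij}) \in \mathbb{Z}^{d\times d}$ be a lower triangular matrix with positive diagonal entries, and let $\mathcal{P}(A)$ be the simplex whose vertices are the rows of $A$ together with the origin. For an index tuple $(i_1,\ldots,i_d)$ with $1 \leq i_j \leq a_{jj}$, define recursively $\lambda_d^{i_d} = i_d/a_{dd}$ and, for $k < d$, $\lambda_k^{i_k,\ldots,i_d} = a_{kk}^{-1}(i_k - \{\sum_{h=k+1}^d a_{hk}\lambda_h^{i_h,\ldots,i_d}\})$ (where $\{r\}$ denotes the fractional part), and set $s_{i_1\cdots i_d} = \lfloor \sum_{k=1}^d \lambda_k^{i_k,\ldots,i_d} \rfloor + 1$. Then the generating function for interior lattice points satisfies $\sum_{n\geq 1} |n(\mathcal{P}(A) \setminus \partial\mathcal{P}(A)) \cap \mathbb{Z}^d|\, t^n = (1-t)^{-(d+1)} \sum_{(i_1,\ldots,i_d)} t^{s_{i_1\cdots i_d}}$. -/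
open Set Pointwise

/-- The number of lattice points in the `n`-th dilation of `P ⊆ ℝ^N`. -/
noncomputable def ehr {N : ℕ} (P : Set (Fin N → ℝ)) (n : ℕ) : ℕ :=
  Set.ncard {x : Fin N → ℤ | (fun i => (x i : ℝ)) ∈ (n : ℝ) • P}

/-- The `i`-th coefficient of `(1-λ)^(d+1) * (1 + ∑_{n ≥ 1} i(P,n) λ^n)`,
i.e. the `i`-th entry of the δ-vector of a `d`-dimensional integral polytope. -/
noncomputable def deltaVec {N : ℕ} (P : Set (Fin N → ℝ)) (d i : ℕ) : ℤ :=
  ∑ j ∈ Finset.range (i + 1),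
    (-1 : ℤ) ^ (i - j) * (Nat.choose (d + 1) (i - j) : ℤ) * (ehr P j : ℤ)

/-- `P ⊆ ℝ^N` is an integral polytope of dimension `d`. -/
def IsIntegralPolytope {N : ℕ} (P : Set (Fin N → ℝ)) (d : ℕ) : Prop :=
  ∃ V : Finset (Fin N → ℤ), V.Nonempty ∧
    P = convexHull ℝ ((fun v i => ((v i : ℝ))) '' (V : Set (Fin N → ℤ))) ∧
    Module.finrank ℝ (vectorSpan ℝ P) = d

/-- `lamRev d A f m` is `λ_k` (0-indexed `k = d - 1 - m`) defined by the downward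
recursion `λ_k = (i_k - frac(∑_{h > k} a_{h k} λ_h)) / a_{k k}`, where `i_k = f k`. -/
noncomputable def lamRev (d : ℕ) (A : Matrix (Fin d) (Fin d) ℤ) (f : Fin d → ℕ) :
    ℕ → ℚ
  | m =>
    if h : m < d then
      let k : Fin d := ⟨d - 1 - m, by omega⟩
      ((f k : ℚ) - Int.fract (∑ r ∈ (Finset.range m).attach,
        (A ⟨d - 1 - r.1, by omega⟩ k : ℚ) * lamRev d A f r.1)) / (A k k : ℚ)
    else 0
termination_by m => m
decreasing_by exact Finset.mem_range.mp r.2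

/-- `s_{i_1 ⋯ i_d} = ⌊∑_k λ_k⌋ + 1` for the index tuple `f`. -/
noncomputable def sVal (d : ℕ) (A : Matrix (Fin d) (Fin d) ℤ) (f : Fin d → ℕ) : ℤ :=
  ⌊∑ m ∈ Finset.range d, lamRev d A f m⌋ + 1

theorem convexHull_insert_zero_range_single {ι : Type*} [Fintype ι] [DecidableEq ι] :
    convexHull ℝ (insert (0 : ι → ℝ) (range fun i => Pi.single i 1)) =
      {x | (∀ i, 0 ≤ x i) ∧ ∑ i, x i ≤ 1} := by
  apply Subset.antisymm
  · refine convexHull_min ?_ ?_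
    · rintro x (rfl | ⟨i, rfl⟩)
      · simp
      · refine ⟨fun j => ?_, by simp⟩
        by_cases h : j = i
        · subst h; simp
        · simp [h]
    · rintro x ⟨hx, hx'⟩ y ⟨hy, hy'⟩ a b ha hb hab
      refine ⟨fun i => ?_, ?_⟩
      · have := mul_nonneg ha (hx i)
        have := mul_nonneg hb (hy i)
        simp only [Pi.add_apply, Pi.smul_apply, smul_eq_mul]
        linarith
      · simp only [Pi.add_apply, Pi.smul_apply, smul_eq_mul, Finset.sum_add_distrib,
          ← Finset.mul_sum]
        nlinarith
  · rintro x ⟨hx, hx'⟩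
    let w : Option ι → ℝ := fun o => o.elim (1 - ∑ i, x i) x
    let z : Option ι → ι → ℝ := fun o => o.elim 0 (fun i => Pi.single i 1)
    have hz : ∑ o, w o • z o = x := by
      rw [Fintype.sum_option]
      ext j
      simp [w, z, Finset.sum_apply, Pi.single_apply]
    rw [← hz]
    refine (convex_convexHull ℝ _).sum_mem ?_ ?_ ?_
    · rintro (_ | i) -
      · simpa [w] using hx'
      · exact hx i
    · simp [Fintype.sum_option, w]
    · rintro (_ | i) -
      · exact subset_convexHull ℝ _ (mem_insert _ _)
      · exact subset_convexHull ℝ _ (mem_insert_of_mem _ ⟨i, rfl⟩)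

theorem interior_nonneg_sum_le_one {ι : Type*} [Fintype ι] :
    interior {x : ι → ℝ | (∀ i, 0 ≤ x i) ∧ ∑ i, x i ≤ 1} =
      {x | (∀ i, 0 < x i) ∧ ∑ i, x i < 1} := by
  apply Subset.antisymm
  · intro x hx
    rw [mem_interior_iff_mem_nhds] at hx
    have hsub : ∀ᶠ t in nhds (0 : ℝ), (x - t • (1 : ι → ℝ)) ∈
        {x : ι → ℝ | (∀ i, 0 ≤ x i) ∧ ∑ i, x i ≤ 1} := by
      have : ContinuousAt (fun t : ℝ => x - t • (1 : ι → ℝ)) 0 := by fun_prop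
      exact this.eventually_mem (by simpa using hx)
    have hadd : ∀ᶠ t in nhds (0 : ℝ), ((1 + t) • x) ∈
        {x : ι → ℝ | (∀ i, 0 ≤ x i) ∧ ∑ i, x i ≤ 1} := by
      have : ContinuousAt (fun t : ℝ => (1 + t) • x) 0 := by fun_prop
      exact this.eventually_mem (by simpa using hx)
    obtain ⟨t, ⟨h₁, h₂⟩, ht⟩ := (((hsub.and hadd).filter_mono nhdsWithin_le_nhds).and
      (self_mem_nhdsWithin (s := Ioi (0 : ℝ)))).exists
    have ht : 0 < t := ht
    refine ⟨fun i => ?_, ?_⟩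
    · have := h₁.1 i
      simp at this
      linarith
    · have := h₂.2
      simp only [Pi.smul_apply, smul_eq_mul, ← Finset.mul_sum] at this
      by_contra! hge
      nlinarith
  · refine interior_maximal (fun x hx => ⟨fun i => (hx.1 i).le, hx.2.le⟩) ?_
    have : {x : ι → ℝ | (∀ i, 0 < x i) ∧ ∑ i, x i < 1} =
        (⋂ i, {x | 0 < x i}) ∩ {x | ∑ i, x i < 1} := by
      ext; simp
    rw [this]
    refine (isOpen_iInter_of_finite fun i => ?_).inter ?_
    · exact isOpen_lt continuous_const (continuous_apply i)
    · exact isOpen_lt (by fun_prop) continuous_const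

theorem interior_convexHull_insert_zero_rows {ι : Type*} [Fintype ι] [DecidableEq ι]
    (M : Matrix ι ι ℝ) (hM : M.det ≠ 0) :
    interior (convexHull ℝ (insert 0 (range fun i => M i))) =
      (fun c => Matrix.vecMul c M) '' {c | (∀ i, 0 < c i) ∧ ∑ i, c i < 1} := by
  have hinj : Function.Injective M.vecMulLinear := by
    rw [← LinearMap.ker_eq_bot, LinearMap.ker_eq_bot']
    intro c hc
    exact Matrix.eq_zero_of_vecMul_eq_zero hM hc
  let e := (LinearEquiv.ofInjectiveEndo M.vecMulLinear hinj).toContinuousLinearEquiv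
  have he : ∀ c, e c = Matrix.vecMul c M := fun c => rfl
  have himage : convexHull ℝ (insert 0 (range fun i => M i)) =
      e '' {c | (∀ i, 0 ≤ c i) ∧ ∑ i, c i ≤ 1} := by
    rw [← convexHull_insert_zero_range_single]
    have := (e : (ι → ℝ) →ₗ[ℝ] (ι → ℝ)).image_convexHull
      (insert (0 : ι → ℝ) (range fun i => Pi.single i 1))
    refine Eq.trans ?_ this.symm
    rw [image_insert_eq, ← range_comp]
    congr 2
    · exact (map_zero e).symm
    · congr 1
      ext i : 1
      exact (Matrix.single_one_vecMul i M).symm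
  rw [himage, ← interior_nonneg_sum_le_one]
  exact (e.toHomeomorph.image_interior _).symm

theorem mem_smul_interior_convexHull_insert_zero_rows {ι : Type*} [Fintype ι] [DecidableEq ι]
    (M : Matrix ι ι ℝ) (hM : M.det ≠ 0) {r : ℝ} (hr : 0 < r) (x : ι → ℝ) :
    x ∈ r • interior (convexHull ℝ (insert 0 (range fun i => M i))) ↔
      ∃ c : ι → ℝ, (∀ i, 0 < c i) ∧ ∑ i, c i < r ∧ Matrix.vecMul c M = x := by
  rw [interior_convexHull_insert_zero_rows M hM, mem_smul_set]
  constructor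
  · rintro ⟨_, ⟨c, ⟨hc, hc'⟩, rfl⟩, rfl⟩
    refine ⟨r • c, fun i => mul_pos hr (hc i), ?_, Matrix.smul_vecMul _ _ _⟩
    simp only [Pi.smul_apply, smul_eq_mul, ← Finset.mul_sum]
    nlinarith
  · rintro ⟨c, hc, hc', rfl⟩
    refine ⟨_, ⟨r⁻¹ • c, ⟨fun i => mul_pos (inv_pos.2 hr) (hc i), ?_⟩, rfl⟩, ?_⟩
    · simp only [Pi.smul_apply, smul_eq_mul, ← Finset.mul_sum]
      rwa [inv_mul_lt_iff₀ hr, mul_one]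
    · dsimp only
      rw [Matrix.smul_vecMul, smul_inv_smul₀ hr.ne']

/-- The real number `λ_k`, indexed by `k` itself. -/
noncomputable def lam {d : ℕ} (A : Matrix (Fin d) (Fin d) ℤ) (f : Fin d → ℕ) (k : Fin d) : ℝ :=
  (lamRev d A f (d - 1 - k) : ℚ)

section lam

variable {d : ℕ} {A : Matrix (Fin d) (Fin d) ℤ} {f : Fin d → ℕ}

theorem sum_lam : ∑ k, lam A f k = ((∑ m ∈ Finset.range d, lamRev d A f m : ℚ) : ℝ) := by
  rw [← Finset.sum_range_reflect, Finset.sum_range, Rat.cast_sum]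
  rfl

theorem mul_lam (hdiag : ∀ i, 0 < A i i) (k : Fin d) :
    (A k k : ℝ) * lam A f k =
      f k - Int.fract (∑ h ∈ Finset.Ioi k, (A h k : ℝ) * lam A f h) := by
  have hk : (A k k : ℝ) ≠ 0 := by exact_mod_cast (hdiag k).ne'
  have hidx : (⟨d - 1 - (d - 1 - k), by omega⟩ : Fin d) = k := by ext; simp; omega
  rw [lam, lamRev, dif_pos (by omega)]
  simp only [hidx]
  push_cast
  rw [mul_div_cancel₀ _ hk]
  congr 2
  refine Finset.sum_bij' (fun r _ => ⟨d - 1 - r.1, by have := Finset.mem_range.1 r.2; omega⟩)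
    (fun h hh => ⟨d - 1 - h, by
      have := Finset.mem_Ioi.1 hh
      rw [Fin.lt_def] at this
      rw [Finset.mem_range]
      omega⟩) ?_ ?_ ?_ ?_ ?_
  · rintro ⟨r, hr⟩ -
    have := Finset.mem_range.1 hr
    rw [Finset.mem_Ioi, Fin.lt_def]
    dsimp only
    omega
  · intro h hh
    exact Finset.mem_attach _ _
  · rintro ⟨r, hr⟩ -
    have := Finset.mem_range.1 hr
    ext
    dsimp only
    omega
  · intro h hh
    ext
    dsimp only
    omega
  · rintro ⟨r, hr⟩ -
    have := Finset.mem_range.1 hr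
    rw [lam]
    congr 3
    dsimp only
    omega

theorem lam_pos (hdiag : ∀ i, 0 < A i i) {k : Fin d} (hf : 1 ≤ f k) : 0 < lam A f k := by
  have hk : (0 : ℝ) < A k k := by exact_mod_cast hdiag k
  have hf' : (1 : ℝ) ≤ f k := by exact_mod_cast hf
  refine pos_of_mul_pos_right ?_ hk.le
  rw [mul_lam hdiag]
  linarith [Int.fract_lt_one (∑ h ∈ Finset.Ioi k, (A h k : ℝ) * lam A f h)]

theorem lam_le_one (hdiag : ∀ i, 0 < A i i) {k : Fin d} (hf : (f k : ℤ) ≤ A k k) :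
    lam A f k ≤ 1 := by
  have hk : (0 : ℝ) < A k k := by exact_mod_cast hdiag k
  have hf' : (f k : ℝ) ≤ A k k := by exact_mod_cast hf
  refine le_of_mul_le_mul_left ?_ hk
  rw [mul_lam hdiag]
  linarith [Int.fract_nonneg (∑ h ∈ Finset.Ioi k, (A h k : ℝ) * lam A f h)]

theorem lam_injective (hdiag : ∀ i, 0 < A i i) : Function.Injective (lam A) := by
  intro f g hfg
  ext k
  have hf := mul_lam (f := f) hdiag k
  have hg := mul_lam (f := g) hdiag k
  rw [hfg] at hf
  have : (f k : ℝ) = g k := by linarith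
  exact_mod_cast this

theorem eq_lam (hdiag : ∀ i, 0 < A i i) {c : Fin d → ℝ}
    (hc : ∀ k, (A k k : ℝ) * c k = f k - Int.fract (∑ h ∈ Finset.Ioi k, (A h k : ℝ) * c h)) :
    lam A f = c := by
  ext k
  induction k using WellFoundedGT.induction with
  | _ k ih =>
    have hk : (A k k : ℝ) ≠ 0 := by exact_mod_cast (hdiag k).ne'
    apply mul_left_cancel₀ hk
    rw [mul_lam hdiag, hc, Finset.sum_congr rfl fun h hh => by rw [ih h (Finset.mem_Ioi.1 hh)]]

theorem sum_mul_eq_of_lower (hlow : ∀ i j, i < j → A i j = 0) (c : Fin d → ℝ) (k : Fin d) :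
    ∑ h, c h * (A h k : ℝ) = A k k * c k + ∑ h ∈ Finset.Ioi k, (A h k : ℝ) * c h := by
  have hsub : Finset.Ici k ⊆ Finset.univ := Finset.subset_univ _
  rw [← Finset.sum_subset hsub fun h _ hh => ?_, ← Finset.Ioi_insert, Finset.sum_insert (by simp)]
  · simp only [mul_comm]
  · rw [hlow h k (by simpa using hh)]
    simp

theorem sum_lam_mul (hlow : ∀ i j, i < j → A i j = 0) (hdiag : ∀ i, 0 < A i i) (k : Fin d) :
    ∑ h, lam A f h * (A h k : ℝ) =
      (f k + ⌊∑ h ∈ Finset.Ioi k, (A h k : ℝ) * lam A f h⌋ : ℤ) := by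
  rw [sum_mul_eq_of_lower hlow, mul_lam hdiag, ← Int.self_sub_floor]
  push_cast
  ring

theorem exists_lam_eq (hlow : ∀ i j, i < j → A i j = 0) (hdiag : ∀ i, 0 < A i i)
    {c : Fin d → ℝ} (hpos : ∀ k, 0 < c k) (hle : ∀ k, c k ≤ 1)
    (hint : ∀ k, ∃ z : ℤ, ∑ h, c h * (A h k : ℝ) = z) :
    ∃ f ∈ Fintype.piFinset (fun j : Fin d => Finset.Icc 1 (A j j).toNat), lam A f = c := by
  choose z hz using hint
  let g : Fin d → ℤ := fun k => z k - ⌊∑ h ∈ Finset.Ioi k, (A h k : ℝ) * c h⌋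
  have hg : ∀ k, (A k k : ℝ) * c k =
      g k - Int.fract (∑ h ∈ Finset.Ioi k, (A h k : ℝ) * c h) := by
    intro k
    have := hz k
    rw [sum_mul_eq_of_lower hlow] at this
    rw [← Int.self_sub_floor]
    push_cast [g]
    linarith
  have hg_pos : ∀ k, 1 ≤ g k := by
    intro k
    have hk : (0 : ℝ) < A k k := by exact_mod_cast hdiag k
    have := mul_pos hk (hpos k)
    have hlt : (0 : ℝ) < g k := by
      linarith [hg k, Int.fract_nonneg (∑ h ∈ Finset.Ioi k, (A h k : ℝ) * c h)]
    have : 0 < g k := by exact_mod_cast hlt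
    omega
  have hg_le : ∀ k, g k ≤ A k k := by
    intro k
    have hk : (0 : ℝ) < A k k := by exact_mod_cast hdiag k
    have := mul_le_mul_of_nonneg_left (hle k) hk.le
    have hlt : (g k : ℝ) < A k k + 1 := by
      linarith [hg k, Int.fract_lt_one (∑ h ∈ Finset.Ioi k, (A h k : ℝ) * c h)]
    have : g k < A k k + 1 := by exact_mod_cast hlt
    omega
  refine ⟨fun k => (g k).toNat, ?_, eq_lam hdiag fun k => ?_⟩
  · rw [Fintype.mem_piFinset]
    intro k
    have := hg_pos k
    have := hg_le k
    rw [Finset.mem_Icc]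
    omega
  · have : (((g k).toNat : ℕ) : ℝ) = g k := by
      have := Int.toNat_of_nonneg (zero_le_one.trans (hg_pos k))
      exact_mod_cast this
    rw [this, hg]

theorem sVal_add_le_iff (N n : ℤ) : sVal d A f + N ≤ n ↔ ∑ k, lam A f k + N < n := by
  have : ∑ k, lam A f k + N < n ↔ ∑ k, lam A f k < ((n - N : ℤ) : ℝ) := by
    push_cast
    exact lt_sub_iff_add_lt.symm
  rw [this, ← Int.floor_lt, sum_lam, Rat.floor_cast, sVal]
  omega

theorem one_le_sVal (hdiag : ∀ i, 0 < A i i) (hf : ∀ k, 1 ≤ f k) : 1 ≤ sVal d A f := by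
  by_contra! h
  have := (sVal_add_le_iff (A := A) (f := f) 0 0).1 (by omega)
  have := Finset.sum_nonneg fun k (_ : k ∈ Finset.univ) => (lam_pos hdiag (hf k)).le
  push_cast at *
  linarith

end lam

theorem det_map_intCast_ne_zero_of_lower {d : ℕ} {A : Matrix (Fin d) (Fin d) ℤ}
    (hlow : ∀ i j, i < j → A i j = 0) (hdiag : ∀ i, 0 < A i i) :
    (A.map (Int.cast : ℤ → ℝ)).det ≠ 0 := by
  rw [Matrix.det_of_isLowerTriangular]
  · exact Finset.prod_ne_zero_iff.2 fun i _ => by simpa using (hdiag i).ne'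
  · intro i j hij
    simpa using hlow i j hij

/-- A positive real splits uniquely as the sum of an element of `(0, 1]` and a natural number. -/
theorem eq_of_add_natCast_eq {a b : ℝ} (ha : 0 < a) (ha' : a ≤ 1) (hb : 0 < b) (hb' : b ≤ 1)
    {m n : ℕ} (h : a + m = b + n) : a = b ∧ m = n := by
  have h₁ : (m : ℝ) < n + 1 := by linarith
  have h₂ : (n : ℝ) < m + 1 := by linarith
  have h₁ : m < n + 1 := by exact_mod_cast h₁
  have h₂ : n < m + 1 := by exact_mod_cast h₂
  obtain rfl : m = n := by omega
  exact ⟨by linarith, rfl⟩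

theorem coeff_mk_one_pow {R : Type*} [CommSemiring R] (d n : ℕ) :
    PowerSeries.coeff n ((PowerSeries.mk 1 : PowerSeries R) ^ d) =
      ((Finset.univ : Finset (Fin d)).finsuppAntidiag n).card := by
  rw [← Fin.prod_const, PowerSeries.coeff_prod]
  simp

/-- Interior lattice points of the `n`-th dilate correspond to pairs of an index tuple and a
composition of `n - s` into `d + 1` parts, the part with index `0` being slack. -/
theorem ncard_interior_lattice {d : ℕ} {A : Matrix (Fin d) (Fin d) ℤ}
    (hlow : ∀ i j, i < j → A i j = 0) (hdiag : ∀ i, 0 < A i i) {n : ℕ} (hn : n ≠ 0) :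
    Set.ncard {x : Fin d → ℤ | (fun i => (x i : ℝ)) ∈ (n : ℝ) • interior (convexHull ℝ
      (insert (0 : Fin d → ℝ) (Set.range fun i j => (A i j : ℝ))))} =
    ∑ f ∈ Fintype.piFinset (fun j : Fin d => Finset.Icc 1 (A j j).toNat),
      if (sVal d A f).toNat ≤ n then
        ((Finset.univ : Finset (Fin (d + 1))).finsuppAntidiag (n - (sVal d A f).toNat)).card
      else 0 := by
  have hdet := det_map_intCast_ne_zero_of_lower hlow hdiag
  have hbox : ∀ f ∈ Fintype.piFinset (fun j : Fin d => Finset.Icc 1 (A j j).toNat),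
      (∀ k, 1 ≤ f k) ∧ ∀ k, (f k : ℤ) ≤ A k k := by
    intro f hf
    simp only [Fintype.mem_piFinset, Finset.mem_Icc] at hf
    exact ⟨fun k => (hf k).1, fun k => by have := hf k; omega⟩
  let T := (Fintype.piFinset (fun j : Fin d => Finset.Icc 1 (A j j).toNat)).sigma fun f =>
    if (sVal d A f).toNat ≤ n then
      (Finset.univ : Finset (Fin (d + 1))).finsuppAntidiag (n - (sVal d A f).toNat) else ∅
  have hT : ∀ f l, (⟨f, l⟩ : (_ : Fin d → ℕ) × (Fin (d + 1) →₀ ℕ)) ∈ T ↔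
      f ∈ Fintype.piFinset (fun j : Fin d => Finset.Icc 1 (A j j).toNat) ∧
        sVal d A f + (l 0 + ∑ i : Fin d, l i.succ : ℕ) = n := by
    intro f l
    rw [Finset.mem_sigma]
    refine and_congr_right fun hf => ?_
    have := one_le_sVal hdiag (hbox f hf).1
    dsimp only
    split_ifs with h
    · rw [Finset.mem_finsuppAntidiag, Fin.sum_univ_succ]
      simp only [Finset.subset_univ, and_true]
      omega
    · simp only [Finset.notMem_empty, false_iff]
      omega
  let φ : (_ : Fin d → ℕ) × (Fin (d + 1) →₀ ℕ) → Fin d → ℤ := fun p k =>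
    (p.1 k + ⌊∑ h ∈ Finset.Ioi k, (A h k : ℝ) * lam A p.1 h⌋) + ∑ h, (p.2 h.succ : ℤ) * A h k
  have hφ : ∀ p, (fun k => (φ p k : ℝ)) =
      Matrix.vecMul (fun h => lam A p.1 h + p.2 h.succ) (A.map (Int.cast : ℤ → ℝ)) := by
    intro p
    ext k
    simp only [φ, Matrix.vecMul, dotProduct, Matrix.map_apply, add_mul, Finset.sum_add_distrib]
    rw [sum_lam_mul hlow hdiag]
    push_cast
    rfl
  have hset : {x : Fin d → ℤ | (fun i => (x i : ℝ)) ∈ (n : ℝ) • interior (convexHull ℝ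
      (insert (0 : Fin d → ℝ) (Set.range fun i j => (A i j : ℝ))))} = φ '' (T : Set _) := by
    ext x
    have hn' : (0 : ℝ) < n := by positivity
    refine (mem_smul_interior_convexHull_insert_zero_rows _ hdet hn' _).trans ?_
    constructor
    · rintro ⟨c, hc, hcn, hcx⟩
      let m : Fin d → ℕ := fun k => ⌈c k⌉₊ - 1
      have hm : ∀ k, (m k : ℝ) = ⌈c k⌉₊ - 1 := fun k => by
        have : 1 ≤ ⌈c k⌉₊ := Nat.ceil_pos.2 (hc k)
        push_cast [m, Nat.cast_sub this]
        rfl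
      obtain ⟨f, hf, hfc⟩ := exists_lam_eq hlow hdiag (c := fun k => c k - m k)
        (fun k => by linarith [hm k, Nat.ceil_lt_add_one (hc k).le])
        (fun k => by linarith [hm k, Nat.le_ceil (c k)])
        (fun k => ⟨x k - ∑ h, (m h : ℤ) * A h k, by
          have := congrFun hcx k
          simp only [Matrix.vecMul, dotProduct, Matrix.map_apply] at this
          push_cast
          simp only [sub_mul, Finset.sum_sub_distrib, this]⟩)
      have hs : sVal d A f + (∑ i, m i : ℕ) ≤ n := by
        have := (sVal_add_le_iff (A := A) (f := f) ((∑ i, m i : ℕ) : ℤ) n).2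
        apply this
        rw [hfc]
        push_cast
        simpa [Finset.sum_sub_distrib] using hcn
      let l : Fin (d + 1) →₀ ℕ := Finsupp.equivFunOnFinite.symm
        (Fin.cons (n - ((sVal d A f).toNat + ∑ i, m i)) m)
      have hl : ∀ i : Fin d, l i.succ = m i := fun i => by simp [l]
      have hl₀ : l 0 = n - ((sVal d A f).toNat + ∑ i, m i) := by simp [l]
      refine ⟨⟨f, l⟩, (hT _ _).2 ⟨hf, ?_⟩, ?_⟩
      · have := one_le_sVal hdiag (hbox f hf).1
        simp only [hl, hl₀]
        omega
      · have := hφ ⟨f, l⟩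
        simp only [hl, hfc, sub_add_cancel] at this
        rw [hcx] at this
        ext k
        exact_mod_cast congrFun this k
    · rintro ⟨⟨f, l⟩, hp, rfl⟩
      obtain ⟨hf, hs⟩ := (hT f l).1 hp
      refine ⟨fun h => lam A f h + l h.succ, fun k => ?_, ?_, (hφ ⟨f, l⟩).symm⟩
      · have := lam_pos hdiag ((hbox f hf).1 k)
        positivity
      · have := (sVal_add_le_iff (A := A) (f := f) ((∑ i : Fin d, l i.succ : ℕ) : ℤ) n).1 (by omega)
        rw [Finset.sum_add_distrib]
        push_cast at this
        exact this
  have hinj : InjOn φ (T : Set _) := by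
    rintro ⟨f, l⟩ hp ⟨g, l'⟩ hq hpq
    obtain ⟨hf, hs⟩ := (hT f l).1 hp
    obtain ⟨hg, hs'⟩ := (hT g l').1 hq
    have hvec := hφ ⟨f, l⟩
    rw [hpq, hφ ⟨g, l'⟩] at hvec
    have hcoord : (fun h => lam A g h + (l' h.succ : ℝ)) = fun h => lam A f h + (l h.succ : ℝ) :=
      sub_eq_zero.1 (Matrix.eq_zero_of_vecMul_eq_zero hdet
      (by rw [Matrix.sub_vecMul, hvec, sub_self]))
    have hsplit := fun k => eq_of_add_natCast_eq (lam_pos hdiag ((hbox g hg).1 k))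
      (lam_le_one hdiag ((hbox g hg).2 k)) (lam_pos hdiag ((hbox f hf).1 k))
      (lam_le_one hdiag ((hbox f hf).2 k)) (congrFun hcoord k)
    obtain rfl : g = f := lam_injective hdiag (funext fun k => (hsplit k).1)
    have hsucc : ∀ k : Fin d, l' k.succ = l k.succ := fun k => (hsplit k).2
    obtain rfl : l' = l := by
      ext i
      refine Fin.cases ?_ hsucc i
      simp only [hsucc] at hs'
      omega
    rfl
  rw [hset, hinj.ncard_image, Set.ncard_coe_finset, Finset.card_sigma]
  refine Finset.sum_congr rfl fun f _ => ?_
  split_ifs <;> simp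

theorem stmt3 (d : ℕ) (A : Matrix (Fin d) (Fin d) ℤ)
    (hlow : ∀ i j, i < j → A i j = 0) (hdiag : ∀ i, 0 < A i i)
    (P : Set (Fin d → ℝ))
    (hP : P = convexHull ℝ
      (insert (0 : Fin d → ℝ) (Set.range fun i j => (A i j : ℝ)))) :
    (PowerSeries.mk fun n => if n = 0 then (0 : ℤ) else
        (Set.ncard {x : Fin d → ℤ | (fun i => (x i : ℝ)) ∈ (n : ℝ) • interior P} : ℤ)) *
      (1 - PowerSeries.X) ^ (d + 1)
    = ∑ f ∈ Fintype.piFinset (fun j : Fin d => Finset.Icc 1 (A j j).toNat),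
        PowerSeries.X ^ (sVal d A f).toNat := by
  subst hP
  have hinv : (PowerSeries.mk 1 : PowerSeries ℤ) ^ (d + 1) * (1 - PowerSeries.X) ^ (d + 1) = 1 := by
    rw [← mul_pow, PowerSeries.mk_one_mul_one_sub_eq_one, one_pow]
  refine Eq.trans ?_ ((mul_assoc _ _ _).trans ((congrArg _ hinv).trans (mul_one _)))
  congr 1
  ext n
  simp only [PowerSeries.coeff_mk, Finset.sum_mul, map_sum, PowerSeries.coeff_X_pow_mul',
    coeff_mk_one_pow]
  split_ifs with hn
  · refine (Finset.sum_eq_zero fun f hf => if_neg ?_).symm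
    have := one_le_sVal (A := A) (f := f) hdiag fun k =>
      (Finset.mem_Icc.1 (Fintype.mem_piFinset.1 hf k)).1
    omega
  · rw [ncard_interior_lattice hlow hdiag hn]
    push_cast
    rfl
end

section
/- Let $D \geq 1$ and let $A_D \in \mathbb{Z}^{d\times d}$ be the matrix equal to the identity except that row $k$ is $(a_1,\ldots,a_{k-1},D,0,\ldots,0)$ with $0 \leq a_\ell < D$. For $j = 1,\ldots,D-1$ let $d_j$ be the number of indices $\ell$ with $a_\ell = j$. Then the $\delta$-polynomial of the simplex $\mathcal{P}(A_D)$ (rows of $A_D$ together with the origin) is $\sum_{i=1}^D t^{d+1-s_i}$, where $s_i = \lfloor i/D - \sum_{j=1}^{D-1}\{ij/D\}\,d_j \rfloor + d$ and $\{r\}$ denotes fractional part. -/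
open Set Pointwise

theorem card_sum_le_eq_choose (d m : ℕ) :
    Nat.card {y : Fin d → ℕ // ∑ i, y i ≤ m} = (d + m).choose d := by
  have e : {y : Fin d → ℕ // ∑ i, y i ≤ m} ≃ {p : Fin (d + 1) → ℕ // ∑ i, p i = m} :=
    { toFun := fun y => ⟨Fin.cons (m - ∑ i, y.1 i) y.1, by
        rw [Fin.sum_cons]; exact Nat.sub_add_cancel y.2⟩
      invFun := fun p => ⟨Fin.tail p.1, by
        have h := p.2
        rw [Fin.sum_univ_succ] at h
        simp only [Fin.tail]; omega⟩
      left_inv := fun y => by simp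
      right_inv := fun p => by
        apply Subtype.ext
        have h := p.2
        rw [Fin.sum_univ_succ] at h
        have h0 : m - ∑ i, Fin.tail p.1 i = p.1 0 := by simp only [Fin.tail]; omega
        simp only [h0, Fin.cons_self_tail] }
  rw [Nat.card_congr e, ← Nat.card_congr (Sym.equivNatSumOfFintype (Fin (d + 1)) m),
    Nat.card_eq_fintype_card, Sym.card_sym_eq_multichoose, Nat.multichoose_eq, Fintype.card_fin,
    show d + 1 + m - 1 = d + m by omega, Nat.choose_symm_add]

theorem card_add_sum_le (d h n : ℕ) :
    Nat.card {y : Fin d → ℕ // h + ∑ i, y i ≤ n} =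
      if h ≤ n then (d + (n - h)).choose d else 0 := by
  split_ifs with hn
  · rw [← card_sum_le_eq_choose]
    exact Nat.card_congr (Equiv.subtypeEquivRight fun y => by omega)
  · have : IsEmpty {y : Fin d → ℕ // h + ∑ i, y i ≤ n} := ⟨fun y => by have := y.2; omega⟩
    exact Nat.card_of_isEmpty

theorem finite_add_sum_le (d h n : ℕ) : Finite {y : Fin d → ℕ // h + ∑ i, y i ≤ n} := by
  refine Finite.of_injective
    (fun y i => (⟨y.1 i, ?_⟩ : Fin (n + 1)) : _ → Fin d → Fin (n + 1)) ?_
  · have := y.2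
    have := Finset.single_le_sum (f := y.1) (fun _ _ => Nat.zero_le _) (Finset.mem_univ i)
    omega
  · intro y z hyz
    ext i
    simpa using congrArg Fin.val (congrFun hyz i)

/-- The height of the `r`-th point of the half-open fundamental parallelepiped. -/
noncomputable def boxHeight {d : ℕ} (D : ℕ) (u : Fin d → ℤ) (r : ℕ) : ℕ :=
  ⌈((∑ j, (u j * r) % D : ℤ) : ℚ) / D⌉₊

theorem boxHeight_add_le_iff {d D : ℕ} (hD : 1 ≤ D) (u : Fin d → ℤ) (r s n : ℕ) :
    boxHeight D u r + s ≤ n ↔ (D : ℤ) * s + ∑ j, (u j * r) % D ≤ D * n := by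
  have hD' : (0 : ℚ) < D := by exact_mod_cast hD
  have h0 : 0 ≤ ∑ j, (u j * r) % (D : ℤ) :=
    Finset.sum_nonneg fun j _ => Int.emod_nonneg _ (by omega)
  rw [boxHeight, ← Nat.ceil_add_natCast (by positivity), Nat.ceil_le, ← @Int.cast_le ℚ,
    div_add' _ _ _ hD'.ne', div_le_iff₀ hD']
  push_cast
  constructor <;> intro h <;> linarith

theorem boxHeight_le {d D : ℕ} (hD : 1 ≤ D) (u : Fin d → ℤ) (r : ℕ) : boxHeight D u r ≤ d := by
  have h := (boxHeight_add_le_iff hD u r 0 d).2 ?_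
  · simpa using h
  · have : ∑ j, (u j * r) % (D : ℤ) ≤ ∑ _j : Fin d, (D : ℤ) :=
      Finset.sum_le_sum fun j _ => (Int.emod_lt_of_pos _ (by omega)).le
    simp only [Finset.sum_const, Finset.card_univ, Fintype.card_fin, nsmul_eq_mul] at this
    push_cast
    linarith

/-- `D` times the `j`-th barycentric coordinate of `x` with respect to the simplex. -/
def scaledCoord {R : Type*} [Ring R] {d : ℕ} (D : ℕ) (k : Fin d) (u x : Fin d → R) (j : Fin d) :
    R :=
  (if j = k then 0 else (D : R) * x j) + u j * x k

theorem ncard_scaledCoord {d D : ℕ} (hD : 1 ≤ D) (k : Fin d) (u : Fin d → ℤ) (hu : u k = 1)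
    (n : ℕ) :
    Set.ncard {x : Fin d → ℤ | (∀ j, 0 ≤ scaledCoord D k u x j) ∧
      ∑ j, scaledCoord D k u x j ≤ D * n} =
    ∑ r : Fin D, if boxHeight D u r ≤ n then (d + (n - boxHeight D u r)).choose d else 0 := by
  have hD0 : (0 : ℤ) < D := by exact_mod_cast hD
  have key : ∀ (x : Fin d → ℤ) (r : ℕ), x k % D = r → ∀ j, scaledCoord D k u x j =
      D * ((if j = k then 0 else x j) + (u j * x k) / D) + (u j * r) % D := by
    intro x r hr j
    have h1 : u j * r % D = u j * x k % D := by
      rw [← hr, Int.mul_emod, Int.emod_emod_of_dvd _ dvd_rfl, ← Int.mul_emod]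
    have h2 := Int.mul_ediv_add_emod (u j * x k) D
    rw [h1, scaledCoord]
    split_ifs <;> linarith
  have nonneg_iff : ∀ q b : ℤ, 0 ≤ D * q + b % D ↔ 0 ≤ q := by
    intro q b
    have h1 := Int.emod_nonneg b hD0.ne'
    have h2 := Int.emod_lt_of_pos b hD0
    constructor <;> intro h
    · by_contra hq
      nlinarith
    · positivity
  have hr : ∀ x : Fin d → ℤ, x k % D = ((x k % D).toNat : ℕ) := fun x =>
    (Int.toNat_of_nonneg (Int.emod_nonneg _ hD0.ne')).symm
  have inv_mod : ∀ (r : Fin D) (y : ℤ), ((r : ℤ) + D * y) % D = (r : ℕ) := fun r y => by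
    rw [Int.add_mul_emod_self_left, Int.emod_eq_of_lt (by positivity) (by exact_mod_cast r.2)]
  have inv_div : ∀ (r : Fin D) (y : ℤ), ((r : ℤ) + D * y) / D = y := fun r y => by
    rw [Int.add_mul_ediv_left _ _ hD0.ne', Int.ediv_eq_zero_of_lt (by positivity)
      (by exact_mod_cast r.2), zero_add]
  let inv : Fin D × (Fin d → ℕ) → Fin d → ℤ := fun p j =>
    if j = k then p.1 + D * p.2 k else p.2 j - (u j * (p.1 + D * p.2 k)) / D
  have inv_k : ∀ p, inv p k = p.1 + D * p.2 k := fun p => by simp [inv]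
  have inv_floor : ∀ p j, (if j = k then 0 else inv p j) + (u j * inv p k) / D = p.2 j := by
    intro p j
    rw [inv_k]
    by_cases hj : j = k
    · subst hj
      simp [hu, inv_div]
    · simp [hj, inv]
  let e : {x : Fin d → ℤ | (∀ j, 0 ≤ scaledCoord D k u x j) ∧
      ∑ j, scaledCoord D k u x j ≤ D * n} ≃
      {p : Fin D × (Fin d → ℕ) // boxHeight D u p.1 + ∑ j, p.2 j ≤ n} :=
    { toFun := fun x => ⟨⟨⟨(x.1 k % D).toNat, by
          have := Int.emod_lt_of_pos (x.1 k) hD0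
          have := hr x.1
          omega⟩, fun j => ((if j = k then 0 else x.1 j) + (u j * x.1 k) / D).toNat⟩, by
        obtain ⟨x, hx0, hx⟩ := x
        simp only [key x _ (hr x)] at hx0 hx
        rw [boxHeight_add_le_iff hD, Nat.cast_sum, Finset.mul_sum, ← Finset.sum_add_distrib]
        refine le_of_eq_of_le (Finset.sum_congr rfl fun j _ => ?_) hx
        rw [Int.toNat_of_nonneg ((nonneg_iff _ _).1 (hx0 j))]⟩
      invFun := fun p => ⟨inv p.1, by
        obtain ⟨p, hp⟩ := p
        have hmod : inv p k % D = (p.1 : ℕ) := by rw [inv_k, inv_mod]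
        rw [boxHeight_add_le_iff hD, Nat.cast_sum, Finset.mul_sum, ← Finset.sum_add_distrib] at hp
        simp only [Set.mem_ofPred_eq, key _ _ hmod, inv_floor]
        exact ⟨fun j => (nonneg_iff _ _).2 (by positivity), hp⟩⟩
      left_inv := by
        rintro ⟨x, hx0, hx⟩
        simp only [key x _ (hr x)] at hx0
        have hk : (x k % D).toNat + D * (((0 + u k * x k / D).toNat : ℕ) : ℤ) = x k := by
          have := (nonneg_iff _ _).1 (hx0 k)
          rw [if_pos rfl] at this
          rw [Int.toNat_of_nonneg this, ← hr x, hu, one_mul, zero_add, Int.emod_add_mul_ediv]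
        apply Subtype.ext
        funext j
        simp only [inv, if_true, hk]
        by_cases hj : j = k
        · simp [hj]
        · rw [Int.toNat_of_nonneg ((nonneg_iff _ _).1 (hx0 j))]
          simp [hj]
      right_inv := by
        rintro ⟨p, hp⟩
        apply Subtype.ext
        refine Prod.ext (Fin.ext ?_) (funext fun j => ?_)
        · simp [inv_k, inv_mod]
        · simp only [inv_floor, Int.toNat_natCast] }
  have := fun r => finite_add_sum_le d (boxHeight D u r) n
  rw [← Nat.card_coe_set_eq, Nat.card_congr (e.trans (Equiv.subtypeProdEquivSigmaSubtype
    fun (r : Fin D) (y : Fin d → ℕ) => boxHeight D u r + ∑ j, y j ≤ n)), Nat.card_sigma]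
  simp only [card_add_sum_le]

theorem scaledCoord_smul_add {d : ℕ} (D : ℕ) (k : Fin d) (u x y : Fin d → ℝ) (a b : ℝ)
    (j : Fin d) : scaledCoord D k u (a • x + b • y) j =
      a * scaledCoord D k u x j + b * scaledCoord D k u y j := by
  simp only [scaledCoord, Pi.add_apply, Pi.smul_apply, smul_eq_mul]
  split_ifs <;> ring

theorem mem_smul_simplex_iff {d D : ℕ} (hD : 1 ≤ D) (k : Fin d) (u : Fin d → ℝ) (hu : u k = 1)
    (x : Fin d → ℝ) (t : ℝ) (ht : 0 ≤ t) :
    x ∈ t • convexHull ℝ (insert (0 : Fin d → ℝ) (Set.range fun i j =>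
      if i = k then (if j = k then (D : ℝ) else -u j) else if i = j then 1 else 0)) ↔
    (∀ j, 0 ≤ scaledCoord D k u x j) ∧ ∑ j, scaledCoord D k u x j ≤ D * t := by
  have hD0 : (0 : ℝ) < D := by exact_mod_cast hD
  set v : Fin d → Fin d → ℝ := fun i j =>
    if i = k then (if j = k then (D : ℝ) else -u j) else if i = j then 1 else 0 with hv
  have coord_smul : ∀ (a : ℝ) (x : Fin d → ℝ) (j : Fin d),
      scaledCoord D k u (a • x) j = a * scaledCoord D k u x j := fun a x j => by
    simpa using scaledCoord_smul_add D k u x 0 a 0 j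
  have coord_v : ∀ i j, scaledCoord D k u (v i) j = if i = j then (D : ℝ) else 0 := by
    intro i j
    by_cases hi : i = k
    · subst hi
      by_cases hj : j = i
      · subst hj; simp [scaledCoord, hv, hu]
      · simp [scaledCoord, hv, hj, Ne.symm hj]; ring
    · by_cases hj : j = k
      · subst hj; simp [scaledCoord, hv, hi]
      · simp [scaledCoord, hv, hi, hj]
  have sum_v : ∀ x : Fin d → ℝ, ∑ i, (scaledCoord D k u x i / D) • v i = x := by
    intro x
    funext j
    rw [Finset.sum_apply]
    simp only [Pi.smul_apply, smul_eq_mul]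
    by_cases hj : j = k
    · subst hj
      rw [Finset.sum_eq_single j]
      · simp [hv, scaledCoord, hu, hD0.ne']
      · intro i _ hi; simp [hv, hi]
      · simp
    · rw [← Finset.sum_subset (Finset.subset_univ {j, k}), Finset.sum_pair hj]
      · simp [hv, scaledCoord, hu, hj]
        field_simp
        ring
      · intro i _ hi
        simp only [Finset.mem_insert, Finset.mem_singleton, not_or] at hi
        simp [hv, hi.1, hi.2]
  constructor
  · rintro ⟨p, hp, rfl⟩
    have hsub : convexHull ℝ (insert (0 : Fin d → ℝ) (Set.range v)) ⊆
        {p | (∀ j, 0 ≤ scaledCoord D k u p j) ∧ ∑ j, scaledCoord D k u p j ≤ D} := by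
      refine convexHull_min ?_ ?_
      · rintro _ (rfl | ⟨i, rfl⟩)
        · simp [scaledCoord]
        · simp only [Set.mem_ofPred_eq, coord_v, Finset.sum_ite_eq, Finset.mem_univ, if_true, le_refl,
            and_true]
          intro j
          split_ifs <;> positivity
      · rintro p ⟨hp0, hp⟩ q ⟨hq0, hq⟩ a b ha hb hab
        simp only [Set.mem_ofPred_eq, scaledCoord_smul_add, Finset.sum_add_distrib,
          ← Finset.mul_sum]
        refine ⟨fun j => add_nonneg (mul_nonneg ha (hp0 j)) (mul_nonneg hb (hq0 j)), ?_⟩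
        calc _ ≤ a * (D : ℝ) + b * D := by gcongr
          _ = D := by rw [← add_mul, hab, one_mul]
    obtain ⟨hp0, hp1⟩ := hsub hp
    simp only [coord_smul, ← Finset.mul_sum]
    exact ⟨fun j => mul_nonneg ht (hp0 j), by rw [mul_comm (D : ℝ)]; gcongr⟩
  · rintro ⟨hx0, hx⟩
    rcases ht.eq_or_lt with rfl | ht
    · rw [mul_zero] at hx
      have hz := (Finset.sum_eq_zero_iff_of_nonneg fun j _ => hx0 j).1
        (hx.antisymm (Finset.sum_nonneg fun j _ => hx0 j))
      refine ⟨0, subset_convexHull ℝ _ (Set.mem_insert _ _), ?_⟩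
      rw [← sum_v x, Finset.sum_eq_zero fun i hi => by rw [hz i hi, zero_div, zero_smul]]
      simp
    · refine ⟨t⁻¹ • x, ?_, smul_inv_smul₀ ht.ne' x⟩
      refine mem_convexHull_of_exists_fintype
        (fun o : Option (Fin d) => o.elim (1 - ∑ j, scaledCoord D k u (t⁻¹ • x) j / D)
          fun j => scaledCoord D k u (t⁻¹ • x) j / D) (fun o => o.elim 0 v) ?_ ?_ ?_ ?_
      · rintro (_ | j)
        · simp only [Option.elim, coord_smul, ← Finset.sum_div, ← Finset.mul_sum, sub_nonneg]
          rw [div_le_one hD0, inv_mul_le_iff₀ ht]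
          linarith
        · have := hx0 j
          simp only [Option.elim, coord_smul]
          positivity
      · simp [Fintype.sum_option]
      · rintro (_ | j)
        · exact Set.mem_insert _ _
        · exact Set.mem_insert_of_mem _ ⟨j, rfl⟩
      · simp [Fintype.sum_option, sum_v]

theorem coeff_one_sub_X_pow (m i : ℕ) :
    PowerSeries.coeff i ((1 - PowerSeries.X : PowerSeries ℤ) ^ m) = (-1) ^ i * m.choose i := by
  have h : (1 - PowerSeries.X : PowerSeries ℤ) ^ m =
      (((1 + Polynomial.X : Polynomial ℤ) ^ m).comp (Polynomial.C (-1) * Polynomial.X) :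
        Polynomial ℤ) := by
    simp [sub_eq_add_neg]
  rw [h, Polynomial.coeff_coe, Polynomial.comp_C_mul_X_coeff, Polynomial.coeff_one_add_X_pow,
    mul_comm]

theorem deltaVec_eq_coeff {N : ℕ} (P : Set (Fin N → ℝ)) (d i : ℕ) :
    deltaVec P d i = PowerSeries.coeff i
      ((PowerSeries.mk fun n => (ehr P n : ℤ)) * (1 - PowerSeries.X) ^ (d + 1)) := by
  rw [PowerSeries.coeff_mul, Finset.Nat.sum_antidiagonal_eq_sum_range_succ
    (fun p q => PowerSeries.coeff p (PowerSeries.mk fun n => (ehr P n : ℤ)) *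
      PowerSeries.coeff q ((1 - PowerSeries.X : PowerSeries ℤ) ^ (d + 1)))]
  simp only [PowerSeries.coeff_mk, coeff_one_sub_X_pow, deltaVec, Nat.succ_eq_add_one]
  exact Finset.sum_congr rfl fun j _ => by ring

theorem deltaVec_eq_of_ehr {N : ℕ} (P : Set (Fin N → ℝ)) (d : ℕ) {ι : Type*} [Fintype ι]
    (h : ι → ℕ)
    (hP : ∀ n, ehr P n = ∑ r, if h r ≤ n then (d + (n - h r)).choose d else 0) (i : ℕ) :
    deltaVec P d i = ∑ r, if i = h r then 1 else 0 := by
  have : (PowerSeries.mk fun n => (ehr P n : ℤ)) =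
      ∑ r, PowerSeries.X ^ h r * PowerSeries.mk fun n => ((d + n).choose d : ℤ) := by
    ext n
    simp only [PowerSeries.coeff_mk, hP, map_sum, PowerSeries.coeff_X_pow_mul']
    push_cast
    rfl
  rw [deltaVec_eq_coeff, this, Finset.sum_mul]
  simp only [mul_assoc, PowerSeries.mk_add_choose_mul_one_sub_pow_eq_one, mul_one, map_sum,
    PowerSeries.coeff_X_pow]

theorem sum_deltaVec_mul_X_pow {N : ℕ} (P : Set (Fin N → ℝ)) (d : ℕ) {ι : Type*} [Fintype ι]
    (h : ι → ℕ) (hd : ∀ r, h r ≤ d)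
    (hP : ∀ n, ehr P n = ∑ r, if h r ≤ n then (d + (n - h r)).choose d else 0) :
    ∑ i ∈ Finset.range (d + 1), Polynomial.C (deltaVec P d i) * Polynomial.X ^ i =
      ∑ r, (Polynomial.X : Polynomial ℤ) ^ h r := by
  ext i
  simp only [Polynomial.finsetSum_coeff, Polynomial.coeff_C_mul_X_pow, Polynomial.coeff_X_pow,
    Finset.sum_ite_eq, Finset.mem_range]
  split_ifs with hi
  · exact deltaVec_eq_of_ehr P d h hP i
  · exact (Finset.sum_eq_zero fun r _ => if_neg (by have := hd r; omega)).symm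

theorem boxHeight_sub_eq {d D : ℕ} (hD : 1 ≤ D) (k : Fin d) (a : Fin d → ℤ) {i : ℕ}
    (hi1 : 1 ≤ i) (hiD : i ≤ D) :
    boxHeight D (fun j => if j = k then 1 else if j < k then -a j else 0) (D - i) =
      ⌈(1 : ℚ) - i / D + ∑ ℓ with ℓ < k, Int.fract ((i * a ℓ : ℚ) / D)⌉₊ := by
  have hD0 : (0 : ℚ) < D := by exact_mod_cast hD
  have hi0 : (0 : ℚ) < i := by exact_mod_cast hi1
  have hiD' : (i : ℚ) ≤ D := by exact_mod_cast hiD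
  rw [boxHeight, Int.cast_sum, Finset.sum_div]
  congr 1
  have h1 : (1 : ℚ) - i / D = ∑ ℓ : Fin d, if ℓ = k then (1 : ℚ) - i / D else 0 := by simp
  rw [h1, Finset.sum_filter, ← Finset.sum_add_distrib]
  refine Finset.sum_congr rfl fun ℓ _ => ?_
  rw [← Int.fract_div_intCast_eq_div_intCast_mod]
  push_cast [Nat.cast_sub hiD]
  rcases lt_trichotomy ℓ k with h | rfl | h
  · simp only [h.ne, h, if_true, if_false, zero_add]
    rw [show -(a ℓ : ℚ) * (D - i) / D = i * a ℓ / D - (a ℓ : ℤ) by field_simp; ring,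
      Int.fract_sub_intCast]
  · simp only [if_true, lt_irrefl, if_false, add_zero, one_mul]
    rw [sub_div, div_self hD0.ne', Int.fract_eq_self]
    exact ⟨by rw [sub_nonneg, div_le_one hD0]; exact hiD', by linarith [div_pos hi0 hD0]⟩
  · simp [h.ne', h.not_gt]

theorem sum_fract_mul_card {d D : ℕ} (k : Fin d) (a : Fin d → ℤ)
    (ha : ∀ ℓ : Fin d, ℓ < k → 0 ≤ a ℓ ∧ a ℓ < (D : ℤ)) (dj : ℕ → ℕ)
    (hdj : ∀ j : ℕ, dj j =
      (Finset.univ.filter fun ℓ : Fin d => ℓ < k ∧ a ℓ = (j : ℤ)).card) (i : ℕ) :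
    ∑ j ∈ Finset.Icc 1 (D - 1), Int.fract ((i * j : ℚ) / D) * (dj j : ℚ) =
      ∑ ℓ with ℓ < k, Int.fract ((i * a ℓ : ℚ) / D) := by
  have h : ∀ j : ℕ, Int.fract ((i * j : ℚ) / D) * (dj j : ℚ) =
      ∑ ℓ with ℓ < k, if a ℓ = (j : ℤ) then Int.fract ((i * j : ℚ) / D) else 0 := by
    intro j
    rw [hdj, ← Finset.filter_filter, ← Finset.sum_filter, Finset.sum_const, nsmul_eq_mul,
      mul_comm]
  simp only [h]
  rw [Finset.sum_comm]
  refine Finset.sum_congr rfl fun ℓ hℓ => ?_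
  obtain ⟨h0, h1⟩ := ha ℓ (Finset.mem_filter.1 hℓ).2
  obtain ⟨m, hm⟩ := Int.eq_ofNat_of_zero_le h0
  simp only [hm, Nat.cast_inj, Finset.sum_ite_eq, Finset.mem_Icc, Int.cast_natCast]
  split_ifs with hmem
  · rfl
  · have : m = 0 := by omega
    simp [this]

theorem stmt5 (d D : ℕ) (hD : 1 ≤ D) (k : Fin d) (a : Fin d → ℤ)
    (ha : ∀ ℓ : Fin d, ℓ < k → 0 ≤ a ℓ ∧ a ℓ < (D : ℤ))
    (A : Matrix (Fin d) (Fin d) ℤ)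
    (hA : A = Matrix.of fun i j =>
      if i = k then (if j = k then (D : ℤ) else if j < k then a j else 0)
      else if i = j then 1 else 0)
    (dj : ℕ → ℕ)
    (hdj : ∀ j : ℕ, dj j =
      (Finset.univ.filter fun ℓ : Fin d => ℓ < k ∧ a ℓ = (j : ℤ)).card)
    (s : ℕ → ℤ)
    (hs : ∀ i : ℕ, s i =
      ⌊(i : ℚ) / D - ∑ j ∈ Finset.Icc 1 (D - 1),
        Int.fract ((i * j : ℚ) / D) * (dj j : ℚ)⌋ + d)
    (P : Set (Fin d → ℝ))
    (hP : P = convexHull ℝ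
      (insert (0 : Fin d → ℝ) (Set.range fun i j => (A i j : ℝ)))) :
    ∑ i ∈ Finset.range (d + 1), Polynomial.C (deltaVec P d i) * Polynomial.X ^ i
    = ∑ i ∈ Finset.Icc 1 D,
        (Polynomial.X : Polynomial ℤ) ^ ((d : ℤ) + 1 - s i).toNat := by
  set u : Fin d → ℤ := fun j => if j = k then 1 else if j < k then -a j else 0 with hu
  have hP' : ∀ n, ehr P n = ∑ r : Fin D,
      if boxHeight D u r ≤ n then (d + (n - boxHeight D u r)).choose d else 0 := by
    intro n
    rw [← ncard_scaledCoord hD k u (by simp [hu]) n, ehr, hP]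
    congr 1
    ext x
    have hv : (fun i j => (A i j : ℝ)) = fun i j =>
        if i = k then (if j = k then (D : ℝ) else -(u j : ℝ)) else if i = j then 1 else 0 := by
      funext i j
      simp only [hA, Matrix.of_apply, hu]
      split_ifs <;> simp
    have hc : ∀ j, scaledCoord D k (fun j => (u j : ℝ)) (fun j => (x j : ℝ)) j =
        (scaledCoord D k u x j : ℤ) := by
      intro j
      simp only [scaledCoord]
      split_ifs <;> push_cast <;> rfl
    rw [Set.mem_ofPred_eq, Set.mem_ofPred_eq, hv, mem_smul_simplex_iff hD k (fun j => (u j : ℝ))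
      (by simp [hu]) _ _ n.cast_nonneg]
    simp only [hc]
    norm_cast
  rw [sum_deltaVec_mul_X_pow P d (fun r : Fin D => boxHeight D u r)
    (fun r => boxHeight_le hD u r) hP',
    Fin.sum_univ_eq_sum_range (fun r => (Polynomial.X : Polynomial ℤ) ^ boxHeight D u r) D]
  refine (Finset.sum_nbij' (fun i => D - i) (fun r => D - r) ?_ ?_ ?_ ?_ ?_).symm
  · intro i hi
    simp only [Finset.mem_Icc, Finset.mem_range] at hi ⊢
    omega
  · intro r hr
    simp only [Finset.mem_Icc, Finset.mem_range] at hr ⊢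
    omega
  · intro i hi
    simp only [Finset.mem_Icc] at hi
    omega
  · intro r hr
    simp only [Finset.mem_range] at hr
    omega
  · intro i hi
    obtain ⟨hi1, hiD⟩ := Finset.mem_Icc.1 hi
    rw [boxHeight_sub_eq hD k a hi1 hiD, hs, sum_fract_mul_card k a ha dj hdj]
    congr 1
    rw [← Int.ceil_toNat]
    congr 1
    rw [show (1 : ℚ) - i / D + ∑ ℓ with ℓ < k, Int.fract ((i * a ℓ : ℚ) / D) =
      -((i : ℚ) / D - ∑ ℓ with ℓ < k, Int.fract ((i * a ℓ : ℚ) / D)) + 1 by ring,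
      Int.ceil_add_one, Int.ceil_neg]
    ring
end
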